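/- (Theorem 1, second part) The finite counter problem for nondeterministic counter machines is Σ⁰₂-complete: the set {M : M a nondeterministic counter machine (with at least 2 counters) such that there exists β ∈ ℕ with counter v₀ ≤ β at every point of every computation of M} is Σ⁰₂, and every Σ⁰₂ subset of ℕ many-one reduces to it. -/

import Mathlib

/-!
**Membership.** A machine code is decoded primitive recursively, and the state reached under a
given finite list of nondeterministic choices is computed by a primitive recursive simulation
(`simRun`); every reachable configuration arises this way (`reaches_iff_simRun`). Hence `n` is in
`FCset` iff there is a `β` such that, for all lists `b` of choices, `n` is a valid code and
`v₀ ≤ β` in the state reached under `b` (`sigma02_FCset`).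

**Hardness.** For every Σ⁰₂ set `A` there is a primitive recursive `H` with
`n ∈ A ↔ H n` is bounded (`exists_bounding_function`). Passing to bounded evaluation of the code of
the given computable relation makes `H` primitive recursive, so that only total functions
have to be programmed on counter machines.

The programs are built from relocatable blocks (`Block`) with increments, sequential composition
and counting loops. By induction on `Nat.Primrec'`, every primitive recursive function is computed
by a block that restores its inputs and scratch counters (`blockComputable_of_primrec`). The machine
`guessMachine c n` loads `n`, guesses `t`, computes `H n t` into a counter and moves the result to
`v₀`. Apart from the guess it is deterministic and never decrements `v₀`, so the supremum of
`v₀` over all computations is that of the final values `H n t` (`guessMachine_bounded`), and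
`n ↦ (guessMachine c n).code` reduces `A` to `FCset`.
-/

/-- `A ⊆ ℕ` is Σ⁰₁ (recursively enumerable): `A` is the domain of a partial
computable function. -/
def Sigma01 (A : Set ℕ) : Prop :=
  ∃ f : ℕ →. ℕ, Nat.Partrec f ∧ ∀ n, n ∈ A ↔ (f n).Dom

/-- `A ⊆ ℕ` is Π⁰₁: its complement is Σ⁰₁. -/
def Pi01 (A : Set ℕ) : Prop := Sigma01 Aᶜ

/-- `A ⊆ ℕ` is Σ⁰₂: `n ∈ A ↔ ∃ a, ∀ b, R n a b` for a decidable relation `R`. -/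
def Sigma02 (A : Set ℕ) : Prop :=
  ∃ R : ℕ → ℕ → ℕ → Bool, Computable (fun p : ℕ × ℕ × ℕ => R p.1 p.2.1 p.2.2) ∧
    ∀ n, n ∈ A ↔ ∃ a, ∀ b, R n a b = true

/-- `A` many-one reduces to `B`: there is a total computable `f` with
`n ∈ A ↔ f n ∈ B` for all `n`. -/
def ManyOneRed (A B : Set ℕ) : Prop :=
  ∃ f : ℕ → ℕ, Computable f ∧ ∀ n, n ∈ A ↔ f n ∈ B
/-- Instructions of nondeterministic counter machines. -/
inductive Instr where
  | halt : Instr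
  | inc : ℕ → Instr
  | dec : ℕ → Instr
  | branch : ℕ → ℕ → ℕ → Instr
deriving DecidableEq

/-- A nondeterministic counter machine: a number of counters together with a
finite list of instructions `ℓ₀, …, ℓ_m`. -/
structure CM where
  numCounters : ℕ
  prog : List Instr

/-- Counters mentioned by an instruction. -/
def Instr.counters : Instr → List ℕ
  | .halt => []
  | .inc k => [k]
  | .dec k => [k]
  | .branch k _ _ => [k]

/-- Well-formedness: instructions only mention the machine's counters, and the
instruction `halt` occurs exactly once in the program. -/
def CM.WellFormed (M : CM) : Prop :=
  (∀ i ∈ M.prog, ∀ k ∈ i.counters, k < M.numCounters) ∧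
    M.prog.count Instr.halt = 1

/-- A configuration: current location and counter contents. -/
structure Config where
  loc : ℕ
  cnt : ℕ → ℕ

/-- The initial configuration: location `ℓ₀`, all counters equal to `0`. -/
def initConfig : Config := ⟨0, fun _ => 0⟩

/-- One nondeterministic computation step. `halt` has no successor, and
decrementing a zero counter is undefined (no successor). -/
def Step (M : CM) (c c' : Config) : Prop :=
  match M.prog[c.loc]? with
  | none => False
  | some .halt => False
  | some (.inc k) => c' = ⟨c.loc + 1, Function.update c.cnt k (c.cnt k + 1)⟩
  | some (.dec k) => 0 < c.cnt k ∧ c' = ⟨c.loc + 1, Function.update c.cnt k (c.cnt k - 1)⟩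
  | some (.branch k i j) =>
      (c.cnt k ≠ 0 ∧ (c' = ⟨i, c.cnt⟩ ∨ c' = ⟨j, c.cnt⟩)) ∨
        (c.cnt k = 0 ∧ c' = ⟨c.loc + 1, c.cnt⟩)

/-- `c` occurs at some point of some computation of `M`. -/
def Reaches (M : CM) (c : Config) : Prop :=
  Relation.ReflTransGen (Step M) initConfig c

/-- Counter `v₀` exceeds `β` at some point of some computation of `M`. -/
def Overflows (M : CM) (β : ℕ) : Prop := ∃ c, Reaches M c ∧ β < c.cnt 0

/-- Some computation of `M` reaches the `halt` instruction. -/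
def Halts (M : CM) : Prop := ∃ c, Reaches M c ∧ M.prog[c.loc]? = some Instr.halt

/-- An infinite computation of `M`. -/
def IsInfRun (M : CM) (ρ : ℕ → Config) : Prop :=
  ρ 0 = initConfig ∧ ∀ k, Step M (ρ k) (ρ (k + 1))

/-- A (finite or infinite) computation of `M`, presented as an infinite
sequence that stutters forever once no step is possible. -/
def IsComp (M : CM) (ρ : ℕ → Config) : Prop :=
  ρ 0 = initConfig ∧
    ∀ k, Step M (ρ k) (ρ (k + 1)) ∨ ((¬ ∃ c, Step M (ρ k) c) ∧ ρ (k + 1) = ρ k)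

/-- Effective code of an instruction. -/
def Instr.code : Instr → ℕ
  | .halt => Nat.pair 0 0
  | .inc k => Nat.pair 1 k
  | .dec k => Nat.pair 2 k
  | .branch k i j => Nat.pair 3 (Nat.pair k (Nat.pair i j))

/-- Effective code of a list of naturals. -/
def listCode : List ℕ → ℕ
  | [] => 0
  | a :: l => Nat.pair a (listCode l) + 1

/-- A fixed effective encoding of counter machines as natural numbers. -/
def CM.code (M : CM) : ℕ :=
  Nat.pair M.numCounters (listCode (M.prog.map Instr.code))

/-- The finite counter problem, as a set of codes of well-formed machines `M`
with at least 2 counters such that, for some `β ∈ ℕ`, counter `v₀` is at most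
`β` at every point of every computation of `M`. -/
def FCset : Set ℕ :=
  {n | ∃ M : CM, n = M.code ∧ M.WellFormed ∧ 2 ≤ M.numCounters ∧
    ∃ β : ℕ, ∀ c, Reaches M c → c.cnt 0 ≤ β}


/-! ### Codes of machines -/

theorem listCode_eq_encode (l : List ℕ) : listCode l = Encodable.encode l := by
  induction l with
  | nil => rfl
  | cons a l ih => simp [listCode, ih]

/-- The number of counters of the machine coded by `n`. -/
def codeCounters (n : ℕ) : ℕ := n.unpair.1

/-- The list of instruction codes of the machine coded by `n`. -/
def codeProg (n : ℕ) : List ℕ := (Encodable.decode (α := List ℕ) n.unpair.2).getD []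

/-- `x` is the code of an instruction all of whose counters are below `K`. -/
def ValidInstr (x K : ℕ) : Prop :=
  x = 0 ∨ (x.unpair.1 = 1 ∧ x.unpair.2 < K) ∨ (x.unpair.1 = 2 ∧ x.unpair.2 < K) ∨
    (x.unpair.1 = 3 ∧ x.unpair.2.unpair.1 < K)

/-- `n` is the code of a well-formed machine with at least two counters. The number of
occurrences of `halt`, whose code is `0`, is counted by filtering. -/
def ValidCode (n : ℕ) : Prop :=
  (∀ x ∈ codeProg n, ValidInstr x (codeCounters n)) ∧
    ((codeProg n).filter (· = 0)).length = 1 ∧ 2 ≤ codeCounters n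

theorem primrec_codeProg : Primrec codeProg :=
  Primrec.option_getD.comp (Primrec.decode.comp (Primrec.snd.comp Primrec.unpair))
    (Primrec.const [])

theorem primrec_codeCounters : Primrec codeCounters := Primrec.fst.comp Primrec.unpair

theorem primrec_validInstr : PrimrecRel ValidInstr := by
  have hx : Primrec fun p : ℕ × ℕ => p.1 := Primrec.fst
  have hK : Primrec fun p : ℕ × ℕ => p.2 := Primrec.snd
  have h1 : Primrec fun p : ℕ × ℕ => p.1.unpair.1 := Primrec.fst.comp (Primrec.unpair.comp hx)
  have h2 : Primrec fun p : ℕ × ℕ => p.1.unpair.2 := Primrec.snd.comp (Primrec.unpair.comp hx)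
  have h3 : Primrec fun p : ℕ × ℕ => p.1.unpair.2.unpair.1 :=
    Primrec.fst.comp (Primrec.unpair.comp h2)
  exact (Primrec.eq.comp hx (Primrec.const 0)).or
    (((Primrec.eq.comp h1 (Primrec.const 1)).and (Primrec.nat_lt.comp h2 hK)).or
    (((Primrec.eq.comp h1 (Primrec.const 2)).and (Primrec.nat_lt.comp h2 hK)).or
    ((Primrec.eq.comp h1 (Primrec.const 3)).and (Primrec.nat_lt.comp h3 hK))))

theorem primrec_validCode : PrimrecPred ValidCode := by
  have h0 : PrimrecPred fun x : ℕ => x = 0 := Primrec.eq.comp Primrec.id (Primrec.const 0)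
  exact (primrec_validInstr.forall_mem_list.comp primrec_codeProg primrec_codeCounters).and
    ((Primrec.eq.comp (Primrec.list_length.comp ((Primrec.listFilter h0).comp primrec_codeProg))
      (Primrec.const 1)).and (Primrec.nat_le.comp (Primrec.const 2) primrec_codeCounters))

theorem codeCounters_code (M : CM) : codeCounters M.code = M.numCounters := by
  simp [codeCounters, CM.code]

theorem codeProg_code (M : CM) : codeProg M.code = M.prog.map Instr.code := by
  simp [codeProg, CM.code, listCode_eq_encode]

theorem Instr.code_eq_zero (i : Instr) : i.code = 0 ↔ i = .halt := by
  have h : (0 : ℕ) = Nat.pair 0 0 := rfl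
  rw [h]
  cases i <;> simp [Instr.code, Nat.pair_eq_pair]

theorem validInstr_code (i : Instr) (K : ℕ) :
    ValidInstr i.code K ↔ ∀ k ∈ i.counters, k < K := by
  unfold ValidInstr
  rw [Instr.code_eq_zero]
  cases i <;> simp [Instr.code, Instr.counters]

theorem exists_instr_of_valid {x K : ℕ} (h : ValidInstr x K) : ∃ i : Instr, i.code = x := by
  rcases h with h | ⟨h, -⟩ | ⟨h, -⟩ | ⟨h, -⟩
  · exact ⟨.halt, h.symm⟩
  · exact ⟨.inc x.unpair.2, by rw [Instr.code, ← h, Nat.pair_unpair]⟩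
  · exact ⟨.dec x.unpair.2, by rw [Instr.code, ← h, Nat.pair_unpair]⟩
  · exact ⟨.branch x.unpair.2.unpair.1 x.unpair.2.unpair.2.unpair.1 x.unpair.2.unpair.2.unpair.2,
      by rw [Instr.code, ← h, Nat.pair_unpair, Nat.pair_unpair, Nat.pair_unpair]⟩

theorem validCode_code (M : CM) : ValidCode M.code ↔ M.WellFormed ∧ 2 ≤ M.numCounters := by
  have hc : ((M.prog.map Instr.code).filter (· = 0)).length = M.prog.count Instr.halt := by
    rw [← List.countP_eq_length_filter, List.countP_map, List.count]
    congr 1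
    funext i
    simp [Instr.code_eq_zero, Bool.beq_eq_decide_eq]
  unfold ValidCode CM.WellFormed
  rw [codeProg_code, codeCounters_code, hc]
  simp only [List.mem_map, forall_exists_index, and_imp, forall_apply_eq_imp_iff₂,
    validInstr_code, and_assoc]

theorem exists_machine_of_valid {n : ℕ} (h : ValidCode n) : ∃ M : CM, n = M.code := by
  have hl : ∃ l : List Instr, l.map Instr.code = codeProg n := by
    have := h.1
    generalize codeProg n = L at this
    induction L with
    | nil => exact ⟨[], rfl⟩
    | cons a L ih =>
      obtain ⟨l, hl⟩ := ih fun x hx => this x (List.mem_cons_of_mem _ hx)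
      obtain ⟨i, hi⟩ := exists_instr_of_valid (this a List.mem_cons_self)
      exact ⟨i :: l, by simp [hl, hi]⟩
  obtain ⟨l, hl⟩ := hl
  refine ⟨⟨n.unpair.1, l⟩, ?_⟩
  -- Every natural number codes a list of naturals, so `codeProg` never uses its default value.
  have : Encodable.encode (codeProg n) = n.unpair.2 := by
    rw [codeProg, Denumerable.decode_eq_ofNat]
    simp
  rw [CM.code, hl, listCode_eq_encode, this, Nat.pair_unpair]

theorem Instr.code_injective : Function.Injective Instr.code := by
  intro i j h
  cases i <;> cases j <;> simp_all [Instr.code, Nat.pair_eq_pair]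

theorem CM.code_injective : Function.Injective CM.code := by
  rintro ⟨K, l⟩ ⟨K', l'⟩ h
  obtain ⟨hK, hl⟩ := Nat.pair_eq_pair.1 h
  rw [listCode_eq_encode, listCode_eq_encode] at hl
  have := List.map_injective_iff.2 Instr.code_injective (Encodable.encode_injective hl)
  simp_all

/-! ### Simulation of machines -/

/-- A finite representation of a configuration: the location and an association list of
counter values, the most recent assignment first; absent counters hold `0`. -/
abbrev SimState := ℕ × List (ℕ × ℕ)

/-- The value of counter `k`. -/
def SimState.val (s : SimState) (k : ℕ) : ℕ := (s.2.lookup k).getD 0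

/-- The configuration represented by a simulation state. -/
def SimState.toConfig (s : SimState) : Config := ⟨s.1, s.val⟩

/-- One simulated step of the program with instruction codes `l`. The number `d` resolves the
nondeterminism of a branch, and the state is left alone when no step is possible. -/
def simStep (l : List ℕ) (s : SimState) (d : ℕ) : SimState :=
  let x := l.getD s.1 0
  let y := x.unpair.2
  if x.unpair.1 = 1 then (s.1 + 1, (y, s.val y + 1) :: s.2)
  else if x.unpair.1 = 2 then
    if s.val y = 0 then s else (s.1 + 1, (y, s.val y - 1) :: s.2)
  else if x.unpair.1 = 3 then
    if s.val y.unpair.1 = 0 then (s.1 + 1, s.2)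
    else (if d = 0 then y.unpair.2.unpair.1 else y.unpair.2.unpair.2, s.2)
  else s

/-- The state reached under the choices `ds`. -/
def simRun (l ds : List ℕ) : SimState := ds.foldl (simStep l) (0, [])

theorem primrec_val : Primrec₂ SimState.val :=
  Primrec.option_getD.comp₂ (Primrec.listLookup.comp₂ Primrec₂.right
    (Primrec.snd.comp₂ Primrec₂.left)) (Primrec₂.const 0)

theorem primrec_simStep :
    Primrec fun p : List ℕ × SimState × ℕ => simStep p.1 p.2.1 p.2.2 := by
  have hs : Primrec fun p : List ℕ × SimState × ℕ => p.2.1 := Primrec.fst.comp Primrec.snd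
  have hd : Primrec fun p : List ℕ × SimState × ℕ => p.2.2 := Primrec.snd.comp Primrec.snd
  have hloc := Primrec.fst.comp hs
  have hlist := Primrec.snd.comp hs
  have hx : Primrec fun p : List ℕ × SimState × ℕ => p.1.getD p.2.1.1 0 :=
    (Primrec.list_getD 0).comp Primrec.fst hloc
  have ht := Primrec.fst.comp (Primrec.unpair.comp hx)
  have hy := Primrec.snd.comp (Primrec.unpair.comp hx)
  have hk := Primrec.fst.comp (Primrec.unpair.comp hy)
  have hij := Primrec.snd.comp (Primrec.unpair.comp hy)
  have hi := Primrec.fst.comp (Primrec.unpair.comp hij)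
  have hj := Primrec.snd.comp (Primrec.unpair.comp hij)
  have hvy := primrec_val.comp hs hy
  have hvk := primrec_val.comp hs hk
  have hloc1 := Primrec.succ.comp hloc
  unfold simStep
  refine Primrec.ite (Primrec.eq.comp ht (Primrec.const 1)) ?_
    (Primrec.ite (Primrec.eq.comp ht (Primrec.const 2)) ?_
      (Primrec.ite (Primrec.eq.comp ht (Primrec.const 3)) ?_ hs))
  · exact Primrec.pair hloc1 (Primrec.list_cons.comp (Primrec.pair hy (Primrec.succ.comp hvy)) hlist)
  · exact Primrec.ite (Primrec.eq.comp hvy (Primrec.const 0)) hs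
      (Primrec.pair hloc1 (Primrec.list_cons.comp (Primrec.pair hy (Primrec.pred.comp hvy)) hlist))
  · exact Primrec.ite (Primrec.eq.comp hvk (Primrec.const 0)) (Primrec.pair hloc1 hlist)
      (Primrec.pair (Primrec.ite (Primrec.eq.comp hd (Primrec.const 0)) hi hj) hlist)

theorem primrec_simRun : Primrec₂ simRun :=
  Primrec.list_foldl (f := fun p : List ℕ × List ℕ => p.2) (g := fun _ => ((0, []) : SimState))
    (h := fun p q => simStep p.1 q.1 q.2) Primrec.snd (Primrec.const _)
    (primrec_simStep.comp (Primrec.pair (Primrec.fst.comp Primrec.fst) Primrec.snd))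

theorem toConfig_cons (p k v : ℕ) (s : SimState) :
    SimState.toConfig (p, (k, v) :: s.2) = ⟨p, Function.update s.val k v⟩ := by
  unfold SimState.toConfig
  congr 1
  funext j
  by_cases h : j = k
  · simp [SimState.val, h]
  · simp [SimState.val, List.lookup_cons, h, beq_false_of_ne h]

theorem step_simStep (M : CM) (s : SimState) (d : ℕ) :
    SimState.toConfig (simStep (M.prog.map Instr.code) s d) = s.toConfig ∨
      Step M s.toConfig (SimState.toConfig (simStep (M.prog.map Instr.code) s d)) := by
  have hx : (M.prog.map Instr.code).getD s.1 0 = (M.prog[s.1]?.map Instr.code).getD 0 := by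
    simp [List.getD_eq_getElem?_getD]
  have hloc : s.toConfig.loc = s.1 := rfl
  have hcnt : s.toConfig.cnt = s.val := rfl
  unfold simStep Step
  rw [hx, hloc, hcnt]
  rcases hi : M.prog[s.1]? with _ | (_ | k | k | ⟨k, i, j⟩)
  · left; simp
  · left; simp [Instr.code]
  · right; simp [Instr.code, toConfig_cons]
  · by_cases h : s.val k = 0
    · left; simp [Instr.code, h]
    · right; simp [Instr.code, h, toConfig_cons, Nat.pos_of_ne_zero h]
  · by_cases h : s.val k = 0
    · right; simp [Instr.code, h]; rfl
    · by_cases hd : d = 0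
      · right; simp [Instr.code, h, hd]; left; rfl
      · right; simp [Instr.code, h, hd]; right; rfl

theorem exists_simStep (M : CM) (s : SimState) (c : Config) (h : Step M s.toConfig c) :
    ∃ d, SimState.toConfig (simStep (M.prog.map Instr.code) s d) = c := by
  have hx : (M.prog.map Instr.code).getD s.1 0 = (M.prog[s.1]?.map Instr.code).getD 0 := by
    simp [List.getD_eq_getElem?_getD]
  have hloc : s.toConfig.loc = s.1 := rfl
  have hcnt : s.toConfig.cnt = s.val := rfl
  unfold Step at h
  unfold simStep
  rw [hloc, hcnt] at h
  rw [hx]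
  rcases hi : M.prog[s.1]? with _ | (_ | k | k | ⟨k, i, j⟩) <;> rw [hi] at h
  · exact h.elim
  · exact h.elim
  · exact ⟨0, by simp [Instr.code, toConfig_cons, h]⟩
  · exact ⟨0, by simp [Instr.code, toConfig_cons, h.1.ne', h.2]⟩
  · rcases h with ⟨h0, h | h⟩ | ⟨h0, h⟩
    · exact ⟨0, by simp [Instr.code, h0, h]; rfl⟩
    · exact ⟨1, by simp [Instr.code, h0, h]; rfl⟩
    · exact ⟨0, by simp [Instr.code, h0, h]; rfl⟩

theorem reaches_iff_simRun (M : CM) (c : Config) :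
    Reaches M c ↔ ∃ ds, SimState.toConfig (simRun (M.prog.map Instr.code) ds) = c := by
  constructor
  · intro h
    induction h with
    | refl => exact ⟨[], rfl⟩
    | tail _ hstep ih =>
      obtain ⟨ds, rfl⟩ := ih
      obtain ⟨d, hd⟩ := exists_simStep M _ _ hstep
      exact ⟨ds ++ [d], by simpa [simRun] using hd⟩
  · rintro ⟨ds, rfl⟩
    induction ds using List.reverseRecOn with
    | nil => exact Relation.ReflTransGen.refl
    | append_singleton ds d ih =>
      have h : simRun (M.prog.map Instr.code) (ds ++ [d]) =
          simStep (M.prog.map Instr.code) (simRun (M.prog.map Instr.code) ds) d := by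
        simp [simRun]
      rw [h]
      rcases step_simStep M (simRun (M.prog.map Instr.code) ds) d with h | h
      · rwa [h]
      · exact ih.tail h

theorem sigma02_FCset : Sigma02 FCset := by
  classical
  let Q : ℕ → ℕ → ℕ → Prop := fun n β b =>
    ValidCode n ∧ (simRun (codeProg n) (Denumerable.ofNat (List ℕ) b)).val 0 ≤ β
  refine ⟨fun n β b => decide (Q n β b), ?_, fun n => ?_⟩
  · have hn : Primrec fun p : ℕ × ℕ × ℕ => p.1 := Primrec.fst
    have hβ : Primrec fun p : ℕ × ℕ × ℕ => p.2.1 := Primrec.fst.comp Primrec.snd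
    have hb : Primrec fun p : ℕ × ℕ × ℕ => p.2.2 := Primrec.snd.comp Primrec.snd
    have hQ : PrimrecPred fun p : ℕ × ℕ × ℕ => Q p.1 p.2.1 p.2.2 :=
      (primrec_validCode.comp hn).and (Primrec.nat_le.comp (primrec_val.comp
        (primrec_simRun.comp (primrec_codeProg.comp hn)
          ((Primrec.ofNat (List ℕ)).comp hb)) (Primrec.const 0)) hβ)
    exact hQ.decide.to_comp
  · simp only [decide_eq_true_eq]
    constructor
    · rintro ⟨M, rfl, hw, h2, β, hβ⟩
      refine ⟨β, fun b => ⟨(validCode_code M).2 ⟨hw, h2⟩, ?_⟩⟩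
      rw [codeProg_code]
      exact hβ _ ((reaches_iff_simRun M _).2 ⟨_, rfl⟩)
    · rintro ⟨β, hβ⟩
      obtain ⟨M, rfl⟩ := exists_machine_of_valid (hβ 0).1
      obtain ⟨hw, h2⟩ := (validCode_code M).1 (hβ 0).1
      refine ⟨M, rfl, hw, h2, β, fun c hc => ?_⟩
      obtain ⟨ds, rfl⟩ := (reaches_iff_simRun M c).1 hc
      have := (hβ (Encodable.encode ds)).2
      rwa [codeProg_code, Denumerable.ofNat_encode] at this

/-! ### Σ⁰₂ sets as boundedness of primitive recursive functions -/

/-- If `n ∈ A ↔ ∃ a, ∀ b, R n a b`, let `H n t` be the length of the list coded by `t` if this list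
consists of verified counterexamples `b` to `R n i b` for `i = 0, 1, …`, and `0` otherwise. Such
lists exist in all lengths exactly if `n ∉ A`. -/
theorem exists_bounding_function {A : Set ℕ} (hA : Sigma02 A) :
    ∃ H : ℕ → ℕ → ℕ, Primrec₂ H ∧ ∀ n, n ∈ A ↔ ∃ β, ∀ t, H n t ≤ β := by
  classical
  obtain ⟨R, hR, hRA⟩ := hA
  obtain ⟨c, hc⟩ := Nat.Partrec.Code.exists_code.1 hR
  have heval : ∀ n a b, c.eval (Encodable.encode (n, a, b)) =
      Part.some (Encodable.encode (R n a b)) := by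
    intro n a b
    rw [hc]
    simp [PFun.coe_val]
  have hev : ∀ n a b, R n a b = false ↔
      ∃ k, c.evaln k (Encodable.encode (n, a, b)) = some 0 := by
    intro n a b
    have h := Nat.Partrec.Code.evaln_complete (c := c) (n := Encodable.encode (n, a, b)) (x := 0)
    simp only [Option.mem_def] at h
    rw [← h, heval]
    cases R n a b <;> simp
  -- A refutation certificate lists, for each `i` below its length, a `b` with `¬ R n i b`
  -- together with a number of steps within which this is verified.
  let G : ℕ → ℕ × List (ℕ × ℕ) → Prop := fun i p =>
    c.evaln (p.2.getD i (0, 0)).2 (Encodable.encode (p.1, i, (p.2.getD i (0, 0)).1)) = some 0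
  have hG : PrimrecRel G := by
    have hi : Primrec fun q : ℕ × (ℕ × List (ℕ × ℕ)) => q.1 := Primrec.fst
    have hn : Primrec fun q : ℕ × (ℕ × List (ℕ × ℕ)) => q.2.1 := Primrec.fst.comp Primrec.snd
    have hl : Primrec fun q : ℕ × (ℕ × List (ℕ × ℕ)) => q.2.2.getD q.1 (0, 0) :=
      (Primrec.list_getD (0, 0)).comp (Primrec.snd.comp Primrec.snd) hi
    refine Primrec.eq.comp (Nat.Partrec.Code.primrec_evaln.comp
      (Primrec.pair (Primrec.pair (Primrec.snd.comp hl) (Primrec.const c))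
        (Primrec.encode.comp (Primrec.pair hn (Primrec.pair hi (Primrec.fst.comp hl))))))
      (Primrec.const (some 0))
  let L : ℕ → List (ℕ × ℕ) := Denumerable.ofNat (List (ℕ × ℕ))
  refine ⟨fun n t => if ∀ i < (L t).length, G i (n, L t) then (L t).length else 0, ?_, ?_⟩
  · have hL : Primrec fun q : ℕ × ℕ => L q.2 := (Primrec.ofNat _).comp Primrec.snd
    have hlen := Primrec.list_length.comp hL
    have hall : PrimrecPred fun q : ℕ × ℕ => ∀ i < (L q.2).length, G i (q.1, L q.2) :=
      (hG.forall_mem_list.comp (Primrec.list_range.comp hlen)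
        (Primrec.pair Primrec.fst hL)).of_eq (by simp)
    exact Primrec.ite hall hlen (Primrec.const 0)
  · intro n
    rw [hRA]
    constructor
    · rintro ⟨a, ha⟩
      refine ⟨a, fun t => ?_⟩
      beta_reduce
      split_ifs with h
      · by_contra! hlt
        have h1 := (hev n a _).2 ⟨_, h a hlt⟩
        rw [ha] at h1
        cases h1
      · exact Nat.zero_le _
    · rintro ⟨β, hβ⟩
      by_contra! hno
      have hno' : ∀ a : ℕ, ∃ b k, c.evaln k (Encodable.encode (n, a, (b : ℕ))) = some 0 := by
        intro a
        obtain ⟨b, hb⟩ := hno a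
        exact ⟨b, (hev n a b).1 (by simpa using hb)⟩
      choose b k hbk using hno'
      let l := (List.range (β + 1)).map fun a => (b a, k a)
      have h := hβ (Encodable.encode l)
      have hl : L (Encodable.encode l) = l := Denumerable.ofNat_encode l
      have hlen : l.length = β + 1 := by simp [l]
      beta_reduce at h
      rw [hl, if_pos, hlen] at h
      · omega
      · intro i hi
        rw [hlen] at hi
        have : l.getD i (0, 0) = (b i, k i) := by
          simp [l, List.getD_eq_getElem?_getD, List.getElem?_range hi]
        simp only [G, this]
        exact hbk i

/-! ### Deterministic paths and program blocks -/

/-- A deterministic step: `y` is the only successor of `x`, and `v₀` does not decrease. -/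
def DStep (M : CM) (x y : Config) : Prop :=
  Step M x y ∧ (∀ z, Step M x z → z = y) ∧ x.cnt 0 ≤ y.cnt 0

/-- A finite sequence of deterministic steps. -/
abbrev DPath (M : CM) : Config → Config → Prop := Relation.ReflTransGen (DStep M)

theorem DPath.le {M : CM} {x y : Config} (h : DPath M x y) : x.cnt 0 ≤ y.cnt 0 := by
  induction h with
  | refl => exact le_rfl
  | tail _ h ih => exact ih.trans h.2.2

theorem DPath.reaches {M : CM} {x y : Config} (h : DPath M x y) (hx : Reaches M x) :
    Reaches M y :=
  hx.trans (Relation.ReflTransGen.mono (fun _ _ h => h.1) _ _ h)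

theorem dstep_inc {M : CM} {p k : ℕ} (s : ℕ → ℕ) (h : M.prog[p]? = some (.inc k)) :
    DStep M ⟨p, s⟩ ⟨p + 1, Function.update s k (s k + 1)⟩ := by
  refine ⟨by simp [Step, h], fun z hz => by simpa [Step, h] using hz, ?_⟩
  by_cases hk : 0 = k
  · subst hk; simp
  · simp [Function.update_of_ne hk]

theorem dstep_dec {M : CM} {p k : ℕ} (hk : k ≠ 0) (s : ℕ → ℕ) (m : ℕ)
    (h : M.prog[p]? = some (.dec k)) :
    DStep M ⟨p, Function.update s k (m + 1)⟩ ⟨p + 1, Function.update s k m⟩ := by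
  refine ⟨by simp [Step, h], fun z hz => by simpa [Step, h] using hz, ?_⟩
  simp [Function.update_of_ne hk.symm]

theorem dstep_jump {M : CM} {p k i : ℕ} (s : ℕ → ℕ) (hs : s k ≠ 0)
    (h : M.prog[p]? = some (.branch k i i)) : DStep M ⟨p, s⟩ ⟨i, s⟩ :=
  ⟨by simp [Step, h, hs], fun z hz => by simpa [Step, h, hs] using hz, le_rfl⟩

theorem dstep_fall {M : CM} {p k i j : ℕ} (s : ℕ → ℕ) (hs : s k = 0)
    (h : M.prog[p]? = some (.branch k i j)) : DStep M ⟨p, s⟩ ⟨p + 1, s⟩ :=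
  ⟨by simp [Step, h, hs], fun z hz => by simpa [Step, h, hs] using hz, le_rfl⟩

/-- A relocatable piece of program: `code p` is its text when placed at location `p`. The text
has a fixed length, contains no `halt`, mentions only counters below `bound`, and depends on
`p` in a primitive recursive way. -/
structure Block where
  code : ℕ → List Instr
  len : ℕ
  bound : ℕ
  length_code : ∀ p, (code p).length = len
  noHalt : ∀ p, Instr.halt ∉ code p
  counters_lt : ∀ p, ∀ i ∈ code p, ∀ k ∈ i.counters, k < bound
  primrec_code : Primrec fun p => (code p).map Instr.code

/-- The program of `M` contains `l` at location `p`. -/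
def HasCode (M : CM) (p : ℕ) (l : List Instr) : Prop :=
  ∃ a b, M.prog = a ++ l ++ b ∧ a.length = p

theorem HasCode.left {M : CM} {p : ℕ} {l l' : List Instr} (h : HasCode M p (l ++ l')) :
    HasCode M p l := by
  obtain ⟨a, b, h, hp⟩ := h
  exact ⟨a, l' ++ b, by simp [h], hp⟩

theorem HasCode.right {M : CM} {p q : ℕ} {l l' : List Instr} (h : HasCode M p (l ++ l'))
    (hq : q = p + l.length) : HasCode M q l' := by
  obtain ⟨a, b, h, hp⟩ := h
  exact ⟨a ++ l, b, by simp [h], by simp [hp, hq]⟩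

theorem HasCode.get {M : CM} {p : ℕ} {i : Instr} {l : List Instr} (h : HasCode M p (i :: l)) :
    M.prog[p]? = some i := by
  obtain ⟨a, b, h, rfl⟩ := h
  simp [h]

theorem HasCode.tail {M : CM} {p : ℕ} {i : Instr} {l : List Instr} (h : HasCode M p (i :: l)) :
    HasCode M (p + 1) l :=
  HasCode.right (l := [i]) h rfl

/-- Wherever it is placed, block `c` deterministically transforms counter contents `s` into `s'`,
entering at its first location and leaving just behind its last one. -/
def Does (c : Block) (s s' : ℕ → ℕ) : Prop :=
  ∀ M p, HasCode M p (c.code p) → DPath M ⟨p, s⟩ ⟨p + c.len, s'⟩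

theorem Does.congr {c : Block} {s s' s'' : ℕ → ℕ} (h : Does c s s') (e : s' = s'') :
    Does c s s'' := e ▸ h

/-- The empty block. -/
def Block.skip : Block where
  code _ := []
  len := 0
  bound := 0
  length_code _ := rfl
  noHalt _ := by simp
  counters_lt _ := by simp
  primrec_code := Primrec.const _

theorem does_skip (s : ℕ → ℕ) : Does .skip s s := fun _ _ _ => Relation.ReflTransGen.refl

/-- Increment counter `k`. -/
def Block.inc (k : ℕ) : Block where
  code _ := [.inc k]
  len := 1
  bound := k + 1
  length_code _ := rfl
  noHalt _ := by simp
  counters_lt _ := by simp [Instr.counters]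
  primrec_code := Primrec.const _

theorem does_inc (k : ℕ) (s : ℕ → ℕ) :
    Does (.inc k) s (Function.update s k (s k + 1)) := fun _ _ h =>
  Relation.ReflTransGen.single (dstep_inc s h.get)

/-- Sequential composition. -/
def Block.seq (c d : Block) : Block where
  code p := c.code p ++ d.code (p + c.len)
  len := c.len + d.len
  bound := max c.bound d.bound
  length_code p := by simp [c.length_code, d.length_code]
  noHalt p := by simp [c.noHalt, d.noHalt]
  counters_lt p i hi k hk := by
    rcases List.mem_append.1 hi with hi | hi
    · exact lt_max_of_lt_left (c.counters_lt _ i hi k hk)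
    · exact lt_max_of_lt_right (d.counters_lt _ i hi k hk)
  primrec_code := by
    simp only [List.map_append]
    exact Primrec.list_append.comp c.primrec_code
      (d.primrec_code.comp (Primrec.nat_add.comp Primrec.id (Primrec.const _)))

theorem Does.seq {c d : Block} {s s' s'' : ℕ → ℕ} (hc : Does c s s') (hd : Does d s' s'') :
    Does (c.seq d) s s'' := by
  intro M p h
  have h1 := hc M p h.left
  have h2 := hd M (p + c.len) (h.right (by rw [c.length_code]))
  rw [show p + (c.seq d).len = p + c.len + d.len from (Nat.add_assoc _ _ _).symm]
  exact h1.trans h2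

/-- Run `c` and then decrement counter `k`, until `k` is zero. The first test is reached by
incrementing `k`, so that the jump over the body is unconditional, and entering at the
decrement. -/
def Block.loop (k : ℕ) (c : Block) : Block where
  code p := [.inc k, .branch k (p + 2 + c.len) (p + 2 + c.len)] ++
    (c.code (p + 2) ++ [.dec k, .branch k (p + 2) (p + 2)])
  len := c.len + 4
  bound := max (k + 1) c.bound
  length_code p := by simp [c.length_code]
  noHalt p := by simp [c.noHalt]
  counters_lt p i hi j hj := by
    simp only [List.mem_append, List.mem_cons, List.not_mem_nil, or_false] at hi
    rcases hi with (rfl | rfl) | hi | rfl | rfl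
    · simp_all [Instr.counters]
    · simp_all [Instr.counters]
    · exact lt_max_of_lt_right (c.counters_lt _ i hi j hj)
    · simp_all [Instr.counters]
    · simp_all [Instr.counters]
  primrec_code := by
    have hbr : ∀ m, Primrec fun p => Instr.code (.branch k (p + m) (p + m)) := fun m => by
      have hm : Primrec fun p : ℕ => p + m := Primrec.nat_add.comp Primrec.id (Primrec.const m)
      exact Primrec₂.natPair.comp (Primrec.const 3)
        (Primrec₂.natPair.comp (Primrec.const k) (Primrec₂.natPair.comp hm hm))
    have hsingle : ∀ {f : ℕ → ℕ}, Primrec f → Primrec fun p => [f p] := fun hf =>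
      Primrec.list_cons.comp hf (Primrec.const [])
    simp only [List.map_append, List.map_cons, List.map_nil, Nat.add_assoc]
    exact Primrec.list_append.comp
      (Primrec.list_cons.comp (Primrec.const _) (hsingle (hbr _)))
      (Primrec.list_append.comp
        (c.primrec_code.comp (Primrec.nat_add.comp Primrec.id (Primrec.const 2)))
        (Primrec.list_cons.comp (Primrec.const _) (hsingle (hbr 2))))

/-- Here `σ i` is the counter contents at the test after `i` rounds, `N` rounds being made. As `k`
is decremented at the end of each round, `c` itself has to leave `k` unchanged. -/
theorem does_loop {k : ℕ} (hk : k ≠ 0) {c : Block} (N : ℕ) (σ : ℕ → ℕ → ℕ)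
    (hσ : ∀ i ≤ N, σ i k = N - i)
    (h : ∀ i < N, Does c (σ i) (Function.update (σ (i + 1)) k (N - i))) :
    Does (.loop k c) (σ 0) (σ N) := by
  intro M p hM
  have h0 : M.prog[p]? = _ := hM.get
  have h1 : M.prog[p + 1]? = _ := hM.tail.get
  have hrest := hM.right (q := p + 2) rfl
  have hbody := hrest.left
  have hend := hrest.right (q := p + 2 + c.len) (by rw [c.length_code])
  have hdec := hend.get
  have htest := hend.tail.get
  -- The path from the decrement in front of the `i`-th test to the end of the loop.
  have key : ∀ j i, i + j = N →
      DPath M ⟨p + 2 + c.len, Function.update (σ i) k (σ i k + 1)⟩ ⟨p + 2 + c.len + 2, σ N⟩ := by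
    intro j
    induction j with
    | zero =>
      intro i hi
      obtain rfl : i = N := by omega
      have hd := dstep_dec hk (σ i) (σ i k) hdec
      rw [Function.update_eq_self] at hd
      exact (Relation.ReflTransGen.single hd).tail
        (dstep_fall (σ i) (by rw [hσ i le_rfl, Nat.sub_self]) htest)
    | succ j ih =>
      intro i hi
      have hd := dstep_dec hk (σ i) (σ i k) hdec
      rw [Function.update_eq_self] at hd
      have hne : σ i k ≠ 0 := by rw [hσ i (by omega)]; omega
      have hb := h i (by omega) M (p + 2) hbody
      have hi1 := ih (i + 1) (by omega)
      rw [hσ (i + 1) (by omega), show N - (i + 1) + 1 = N - i by omega] at hi1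
      exact (((Relation.ReflTransGen.single hd).tail (dstep_jump (σ i) hne htest)).trans hb).trans
        hi1
  have hs0 := dstep_inc (σ 0) h0
  have hs1 := dstep_jump (Function.update (σ 0) k (σ 0 k + 1)) (by simp) h1
  have := ((Relation.ReflTransGen.single hs0).tail hs1).trans (key N 0 (by omega))
  rwa [show p + (Block.loop k c).len = p + 2 + c.len + 2 by simp only [Block.loop]; omega]

/-- Add counter `k` to counter `m`, leaving `0` in `k`. -/
def Block.move (k m : ℕ) : Block := .loop k (.inc m)

theorem does_move {k m : ℕ} (hk : k ≠ 0) (hkm : k ≠ m) (s : ℕ → ℕ) :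
    Does (.move k m) s (Function.update (Function.update s k 0) m (s m + s k)) := by
  have h := does_loop hk (c := .inc m) (s k)
    (fun i => Function.update (Function.update s k (s k - i)) m (s m + i))
    (fun i _ => by simp [Function.update_of_ne hkm])
    (fun i _ => (does_inc m _).congr (by funext j; simp only [Function.update]; grind))
  simp only [Nat.sub_zero, Nat.add_zero, Nat.sub_self, Function.update_eq_self] at h
  exact h

/-- Set counter `k` to `0`. -/
def Block.clear (k : ℕ) : Block := .loop k .skip

theorem does_clear {k : ℕ} (hk : k ≠ 0) (s : ℕ → ℕ) :
    Does (.clear k) s (Function.update s k 0) := by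
  have h := does_loop hk (c := .skip) (s k) (fun i => Function.update s k (s k - i))
    (fun i _ => by simp) (fun i _ => (does_skip _).congr (by simp))
  simp only [Nat.sub_zero, Nat.sub_self, Function.update_eq_self] at h
  exact h

/-- Add counter `k` to counter `m`, using the empty counter `r` to restore `k`. -/
def Block.copy (k m r : ℕ) : Block :=
  .seq (.move k r) (.loop r (.seq (.inc k) (.inc m)))

theorem does_copy {k m r : ℕ} (hk : k ≠ 0) (hr : r ≠ 0) (hkm : k ≠ m) (hkr : k ≠ r) (hmr : m ≠ r)
    (s : ℕ → ℕ) (hs : s r = 0) :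
    Does (.copy k m r) s (Function.update s m (s m + s k)) := by
  have h := does_loop hr (c := .seq (.inc k) (.inc m)) (s k)
    (fun i => Function.update (Function.update (Function.update s k i) m (s m + i)) r (s k - i))
    (fun i _ => by simp)
    (fun i _ => ((does_inc k _).seq (does_inc m _)).congr
      (by funext j; simp only [Function.update]; grind))
  have hm := (does_move hk hkr s).congr (s'' := Function.update (Function.update
    (Function.update s k 0) m (s m + 0)) r (s k - 0))
    (by funext j; simp only [Function.update]; grind)
  exact (hm.seq h).congr (by funext j; simp only [Function.update]; grind)

/-! ### Blocks computing primitive recursive functions -/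

/-- `f` can be computed by a block, for every placement of its arguments and its result in
counters below `base`: on counter contents where the result counter and all counters from
`base` on are empty, the net effect of the block is to write the value of `f`. -/
def BlockComputable {n : ℕ} (f : List.Vector ℕ n → ℕ) : Prop :=
  ∀ (inp : Fin n → ℕ) (out base : ℕ), 0 < out → out < base →
    (∀ i, 0 < inp i ∧ inp i < base ∧ inp i ≠ out) →
    ∃ c : Block, ∀ s : ℕ → ℕ, s out = 0 → (∀ k, base ≤ k → s k = 0) →
      Does c s (Function.update s out (f (List.Vector.ofFn fun i => s (inp i))))

theorem blockComputable_comp {m n : ℕ} {f : List.Vector ℕ n → ℕ}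
    (g : Fin n → List.Vector ℕ m → ℕ) (hf : BlockComputable f)
    (hg : ∀ i, BlockComputable (g i)) :
    BlockComputable fun a => f (List.Vector.ofFn fun i => g i a) := by
  intro inp out base hout hob hinp
  -- Evaluate the first `j` inner functions into the counters `base, …, base + j - 1`.
  have eval_inner : ∀ j, j ≤ n → ∃ c : Block, ∀ s : ℕ → ℕ, (∀ k, base ≤ k → s k = 0) →
      Does c s (fun k => if h : base ≤ k ∧ k < base + j ∧ k - base < n then
        g ⟨k - base, h.2.2⟩ (List.Vector.ofFn fun i => s (inp i)) else s k) := by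
    intro j
    induction j with
    | zero =>
      intro _
      refine ⟨.skip, fun s _ => (does_skip s).congr ?_⟩
      funext k
      rw [dif_neg (by omega)]
    | succ j ih =>
      intro hj
      obtain ⟨c, hc⟩ := ih (by omega)
      obtain ⟨d, hd⟩ := hg ⟨j, hj⟩ inp (base + j) (base + j + 1) (by omega) (by omega)
        (fun i => ⟨(hinp i).1, by have := (hinp i).2.1; omega, by have := (hinp i).2.1; omega⟩)
      refine ⟨c.seq d, fun s hs => ((hc s hs).seq (hd _ ?_ ?_)).congr ?_⟩
      · rw [dif_neg (by omega)]
        exact hs _ (by omega)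
      · intro k hk
        rw [dif_neg (by omega)]
        exact hs _ (by omega)
      · have hin : ∀ i, ¬ (base ≤ inp i ∧ inp i < base + j ∧ inp i - base < n) := fun i => by
          have := (hinp i).2.1
          omega
        simp only [hin, dite_false]
        funext k
        by_cases hk : k = base + j
        · subst hk
          rw [Function.update_self, dif_pos (by omega)]
          congr 2
          simp
        · rw [Function.update_of_ne hk]
          by_cases h : base ≤ k ∧ k < base + j ∧ k - base < n
          · rw [dif_pos h, dif_pos (by omega)]
          · rw [dif_neg h, dif_neg (by omega)]
  have erase : ∀ j, ∃ c : Block, ∀ s : ℕ → ℕ,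
      Does c s (fun k => if base ≤ k ∧ k < base + j then 0 else s k) := by
    intro j
    induction j with
    | zero =>
      refine ⟨.skip, fun s => (does_skip s).congr ?_⟩
      funext k
      rw [if_neg (by omega)]
    | succ j ih =>
      obtain ⟨c, hc⟩ := ih
      refine ⟨c.seq (.clear (base + j)), fun s =>
        ((hc s).seq (does_clear (by omega) _)).congr ?_⟩
      funext k
      simp only [Function.update]
      grind
  obtain ⟨c, hc⟩ := eval_inner n le_rfl
  obtain ⟨d, hd⟩ := hf (fun i => base + i) out (base + n) hout (by omega)
    (fun i => ⟨by omega, by omega, by omega⟩)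
  obtain ⟨e, he⟩ := erase n
  refine ⟨c.seq (d.seq e), fun s hs0 hs =>
    ((hc s hs).seq ((hd _ ?_ ?_).seq (he _))).congr ?_⟩
  · rw [dif_neg (by omega)]
    exact hs0
  · intro k hk
    rw [dif_neg (by omega)]
    exact hs _ (by omega)
  · funext k
    by_cases hk : k = out
    · subst hk
      rw [if_neg (by omega), Function.update_self, Function.update_self]
      simp
    · rw [Function.update_of_ne hk, Function.update_of_ne hk]
      by_cases h : base ≤ k ∧ k < base + n
      · rw [if_pos h, hs k h.1]
      · rw [if_neg h, dif_neg (by omega)]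

theorem blockComputable_prec {n : ℕ} {f : List.Vector ℕ n → ℕ} {g : List.Vector ℕ (n + 2) → ℕ}
    (hf : BlockComputable f) (hg : BlockComputable g) :
    BlockComputable fun v : List.Vector ℕ (n + 1) =>
      v.head.rec (f v.tail) fun y IH => g (y ::ᵥ IH ::ᵥ v.tail) := by
  intro inp out base hout hob hinp
  -- `base` counts the remaining rounds, `base + 1` the finished ones, `out` holds the current
  -- value of the recursion and `base + 2` receives the next one.
  obtain ⟨cf, hcf⟩ := hf (fun i => inp i.succ) out base hout hob (fun i => hinp i.succ)
  obtain ⟨cg, hcg⟩ := hg (Fin.cons (base + 1) (Fin.cons out fun i => inp i.succ)) (base + 2)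
    (base + 3) (by omega) (by omega) (by
      intro i
      refine Fin.cases ?_ (fun i => Fin.cases ?_ (fun i => ?_) i) i
      · simp
      · simp only [Fin.cons_succ, Fin.cons_zero]; omega
      · simp only [Fin.cons_succ]
        have := hinp i.succ
        omega)
  have hin0 := hinp 0
  refine ⟨(cf.seq (Block.copy (inp 0) base (base + 1))).seq
    ((Block.loop base (cg.seq ((Block.clear out).seq ((Block.move (base + 2) out).seq
      (.inc (base + 1)))))).seq (.clear (base + 1))), fun s hs0 hs => ?_⟩
  set w : List.Vector ℕ n := List.Vector.ofFn fun i => s (inp i.succ) with hw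
  set N := s (inp 0) with hN
  let F : ℕ → ℕ := fun i => Nat.rec (f w) (fun y IH => g (y ::ᵥ IH ::ᵥ w)) i
  let σ : ℕ → ℕ → ℕ := fun i => Function.update (Function.update (Function.update s out (F i))
    base (N - i)) (base + 1) i
  have hloop : Does (Block.loop base (cg.seq ((Block.clear out).seq
      ((Block.move (base + 2) out).seq (.inc (base + 1)))))) (σ 0) (σ N) := by
    refine does_loop (by omega) N σ (fun i _ => ?_) (fun i hi => ?_)
    · simp [σ]
    · refine ((hcg (σ i) ?_ ?_).seq ((does_clear (by omega) _).seq
        ((does_move (by omega) (by omega) _).seq (does_inc _ _)))).congr ?_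
      · simp only [σ, Function.update]
        grind
      · intro k hk
        simp only [σ, Function.update]
        grind
      · have hv : (List.Vector.ofFn fun j : Fin (n + 2) => σ i
            ((Fin.cons (base + 1) (Fin.cons out fun i => inp i.succ) : Fin (n + 2) → ℕ) j)) =
            i ::ᵥ F i ::ᵥ w := by
          have e1 : σ i (base + 1) = i := by simp [σ]
          have e2 : σ i out = F i := by
            simp only [σ, Function.update]
            grind
          have e3 : ∀ j : Fin n, σ i (inp j.succ) = s (inp j.succ) := fun j => by
            have := hinp j.succ
            simp only [σ, Function.update]
            grind
          simp only [List.Vector.ofFn, Fin.cons_zero, Fin.cons_succ, e1, e2, e3, hw]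
        rw [hv]
        have hF : g (i ::ᵥ F i ::ᵥ w) = F (i + 1) := rfl
        rw [hF]
        have h2 : s (base + 2) = 0 := hs _ (by omega)
        funext k
        simp only [σ, Function.update]
        grind
  have hinit := ((hcf s hs0 hs).seq (does_copy (k := inp 0) (m := base) (r := base + 1) (by omega)
    (by omega) (by omega) (by omega) (by omega) _ (by
      have := hs (base + 1) (by omega)
      simp only [Function.update]
      grind))).congr (s'' := σ 0) (by
        have h1 := hs (base + 1) (by omega)
        have h2 := hs base (by omega)
        have hF0 : F 0 = f w := rfl
        funext k
        simp only [σ, hF0, Function.update]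
        grind)
  refine (hinit.seq (hloop.seq (does_clear (by omega) _))).congr ?_
  have hval : (List.Vector.ofFn fun i => s (inp i)).head = N := by simp [List.Vector.ofFn, hN]
  have htail : (List.Vector.ofFn fun i => s (inp i)).tail = w := by simp [List.Vector.ofFn, hw]
  beta_reduce
  rw [hval, htail]
  have h1 := hs (base + 1) (by omega)
  have h2 := hs base (by omega)
  change _ = Function.update s out (F N)
  funext k
  simp only [σ, Function.update]
  grind

theorem blockComputable_of_primrec {n : ℕ} {f : List.Vector ℕ n → ℕ} (hf : Nat.Primrec' f) :
    BlockComputable f := by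
  induction hf with
  | zero =>
    intro inp out base _ _ _
    exact ⟨.skip, fun s hs _ => (does_skip s).congr (by simp [← hs])⟩
  | succ =>
    intro inp out base hout hob hinp
    have h0 := hinp 0
    refine ⟨(Block.copy (inp 0) out base).seq (.inc out), fun s hs0 hs =>
      ((does_copy (by omega) (by omega) (by omega) (by omega) (by omega) s (hs _ le_rfl)).seq
        (does_inc _ _)).congr ?_⟩
    simp [hs0, List.Vector.ofFn]
  | get i =>
    intro inp out base hout hob hinp
    have h0 := hinp i
    refine ⟨Block.copy (inp i) out base, fun s hs0 hs =>
      (does_copy (by omega) (by omega) (by omega) (by omega) (by omega) s (hs _ le_rfl)).congr ?_⟩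
    simp [hs0]
  | comp g _ _ hf hg => exact blockComputable_comp g hf hg
  | prec _ _ hf hg => exact blockComputable_prec hf hg

/-! ### The reduction -/

/-- Counter contents with `a` in `v₁`, `b` in `v₂` and `0` elsewhere. -/
def twoInputs (a b : ℕ) : ℕ → ℕ :=
  Function.update (Function.update (fun _ => 0) 1 a) 2 b

/-- The machine that puts `n` into `v₁` and a nondeterministically chosen positive number into
`v₂`, executes `c`, and halts. -/
def guessMachine (c : Block) (n : ℕ) : CM where
  numCounters := max 3 c.bound
  prog := List.replicate n (.inc 1) ++
    ([.inc 2, .branch 2 n (n + 2)] ++ (c.code (n + 2) ++ [.halt]))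

theorem guessMachine_wellFormed (c : Block) (n : ℕ) : (guessMachine c n).WellFormed := by
  constructor
  · intro i hi k hk
    simp only [guessMachine, List.mem_append, List.mem_replicate, List.mem_cons,
      List.not_mem_nil, or_false] at hi ⊢
    rcases hi with ⟨-, rfl⟩ | (rfl | rfl) | hi | rfl
    · simp_all [Instr.counters]
    · simp_all [Instr.counters]
    · simp_all [Instr.counters]
    · exact lt_max_of_lt_right (c.counters_lt _ i hi k hk)
    · simp_all [Instr.counters]
  · have := List.count_eq_zero_of_not_mem (c.noHalt (n + 2))
    simp [guessMachine, List.count_append, List.count_replicate, this]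

theorem computable_guessMachine (c : Block) : Computable fun n => (guessMachine c n).code := by
  have hadd : Primrec fun n : ℕ => n + 2 := Primrec.nat_add.comp Primrec.id (Primrec.const 2)
  have hrep : Primrec fun n : ℕ => (List.replicate n (Instr.inc 1)).map Instr.code :=
    (Primrec.list_map Primrec.list_range
      (Primrec.const (Instr.inc 1).code).to₂).of_eq fun n => by
        simp [List.map_const']
  have hbr : Primrec fun n : ℕ => Instr.code (.branch 2 n (n + 2)) :=
    Primrec₂.natPair.comp (Primrec.const 3) (Primrec₂.natPair.comp (Primrec.const 2)
      (Primrec₂.natPair.comp Primrec.id hadd))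
  have hprog : Primrec fun n : ℕ => (guessMachine c n).prog.map Instr.code := by
    simp only [guessMachine, List.map_append, List.map_cons, List.map_nil]
    exact Primrec.list_append.comp hrep (Primrec.list_append.comp
      (Primrec.list_cons.comp (Primrec.const _) (Primrec.list_cons.comp hbr (Primrec.const [])))
      (Primrec.list_append.comp (c.primrec_code.comp hadd) (Primrec.const _)))
  have : Primrec fun n => (guessMachine c n).code := by
    simp only [CM.code, listCode_eq_encode]
    exact Primrec₂.natPair.comp (Primrec.const _) (Primrec.encode.comp hprog)
  exact this.to_comp

/-- Every run of `guessMachine` is a deterministic loading phase, a guessing phase and a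
deterministic execution of the block, during all of which `v₀` never decreases. So `v₀` is
bounded by `β` exactly if its final values are. -/
theorem guessMachine_bounded {c : Block} {n : ℕ} {fin : ℕ → ℕ → ℕ}
    (hc : ∀ t, Does c (twoInputs n t) (fin t)) (β : ℕ) :
    (∀ x, Reaches (guessMachine c n) x → x.cnt 0 ≤ β) ↔ ∀ t, fin (t + 1) 0 ≤ β := by
  set M := guessMachine c n with hM
  have hload : ∀ j < n, M.prog[j]? = some (.inc 1) := by
    intro j hj
    simp [hM, guessMachine, List.getElem?_append_left, hj]
  have hcode : HasCode M n ([.inc 2, .branch 2 n (n + 2)] ++ (c.code (n + 2) ++ [.halt])) :=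
    ⟨List.replicate n (.inc 1), [], by simp [hM, guessMachine], by simp⟩
  have hinc : M.prog[n]? = some (.inc 2) := hcode.get
  have hbr : M.prog[n + 1]? = some (.branch 2 n (n + 2)) := hcode.tail.get
  have hrest := hcode.right (q := n + 2) rfl
  have hhalt : M.prog[n + 2 + c.len]? = some .halt :=
    (hrest.right (q := n + 2 + c.len) (by rw [c.length_code])).get
  have hpath : ∀ t, DPath M ⟨n + 2, twoInputs n t⟩ ⟨n + 2 + c.len, fin t⟩ :=
    fun t => hc t M (n + 2) hrest.left
  have hstep1 : ∀ j < n, DStep M ⟨j, twoInputs j 0⟩ ⟨j + 1, twoInputs (j + 1) 0⟩ := by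
    intro j hj
    have h := dstep_inc (twoInputs j 0) (hload j hj)
    have e : Function.update (twoInputs j 0) 1 (twoInputs j 0 1 + 1) = twoInputs (j + 1) 0 := by
      funext k
      simp only [twoInputs, Function.update]
      grind
    rwa [e] at h
  have hstep2 : ∀ t, DStep M ⟨n, twoInputs n t⟩ ⟨n + 1, twoInputs n (t + 1)⟩ := by
    intro t
    have h := dstep_inc (twoInputs n t) hinc
    have e : Function.update (twoInputs n t) 2 (twoInputs n t 2 + 1) = twoInputs n (t + 1) := by
      simp [twoInputs]
    rwa [e] at h
  have hne : ∀ t, twoInputs n (t + 1) 2 ≠ 0 := fun t => by simp [twoInputs]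
  have hzero : ∀ a b, twoInputs a b 0 = 0 := fun a b => by simp [twoInputs, Function.update]
  have hstart : initConfig = ⟨0, twoInputs 0 0⟩ := by
    simp only [initConfig, twoInputs]
    congr 1
    funext k
    simp [Function.update]
  constructor
  · intro h t
    have hinit : ∀ j ≤ n, Reaches M ⟨j, twoInputs j 0⟩ := by
      intro j
      induction j with
      | zero =>
        intro _
        rw [← hstart]
        exact Relation.ReflTransGen.refl
      | succ j ih => exact fun hj => (ih (by omega)).tail (hstep1 j (by omega)).1
    have hguess : ∀ t, Reaches M ⟨n + 1, twoInputs n (t + 1)⟩ := by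
      intro t
      induction t with
      | zero => exact (hinit n le_rfl).tail (hstep2 0).1
      | succ t ih =>
        have hback : Step M ⟨n + 1, twoInputs n (t + 1)⟩ ⟨n, twoInputs n (t + 1)⟩ := by
          simp [Step, hbr, hne]
        exact (ih.tail hback).tail (hstep2 _).1
    have hgo : Step M ⟨n + 1, twoInputs n (t + 1)⟩ ⟨n + 2, twoInputs n (t + 1)⟩ := by
      simp [Step, hbr, hne]
    exact h _ ((hpath (t + 1)).reaches ((hguess t).tail hgo))
  · intro h x hx
    -- A reachable configuration belongs to the loading phase, is one of the two locations of the
    -- guessing loop, or lies on the deterministic path to some final configuration.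
    have hinv : (∃ j ≤ n, x = ⟨j, twoInputs j 0⟩) ∨ (∃ t, x = ⟨n, twoInputs n t⟩) ∨
        (∃ t, x = ⟨n + 1, twoInputs n (t + 1)⟩) ∨
        ∃ t, DPath M x ⟨n + 2 + c.len, fin (t + 1)⟩ := by
      induction hx with
      | refl =>
        exact Or.inl ⟨0, Nat.zero_le _, hstart⟩
      | @tail y z _ hyz ih =>
        have guess : ∀ t, y = ⟨n, twoInputs n t⟩ → z = ⟨n + 1, twoInputs n (t + 1)⟩ :=
          fun t ht => (hstep2 t).2.1 z (ht ▸ hyz)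
        rcases ih with ⟨j, hj, rfl⟩ | ⟨t, ht⟩ | ⟨t, rfl⟩ | ⟨t, ht⟩
        · rcases hj.lt_or_eq with hj | rfl
          · exact Or.inl ⟨j + 1, hj, (hstep1 j hj).2.1 z hyz⟩
          · exact Or.inr (Or.inr (Or.inl ⟨0, guess 0 rfl⟩))
        · exact Or.inr (Or.inr (Or.inl ⟨t, guess t ht⟩))
        · have hz : z = ⟨n, twoInputs n (t + 1)⟩ ∨ z = ⟨n + 2, twoInputs n (t + 1)⟩ := by
            simpa [Step, hbr, hne] using hyz
          rcases hz with rfl | rfl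
          · exact Or.inr (Or.inl ⟨t + 1, rfl⟩)
          · exact Or.inr (Or.inr (Or.inr ⟨t, hpath (t + 1)⟩))
        · rcases Relation.ReflTransGen.cases_head ht with rfl | ⟨w, hw, hrest⟩
          · simp [Step, hhalt] at hyz
          · obtain rfl := hw.2.1 z hyz
            exact Or.inr (Or.inr (Or.inr ⟨t, hrest⟩))
    rcases hinv with ⟨j, -, rfl⟩ | ⟨t, rfl⟩ | ⟨t, rfl⟩ | ⟨t, ht⟩
    · simp [hzero]
    · simp [hzero]
    · simp [hzero]
    · exact ht.le.trans (h t)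

theorem manyOneRed_FCset {A : Set ℕ} (hA : Sigma02 A) : ManyOneRed A FCset := by
  obtain ⟨H, hH, hHA⟩ := exists_bounding_function hA
  obtain ⟨d, hd⟩ := blockComputable_of_primrec (Nat.Primrec'.prim_iff₂.2 hH)
    ![1, 2] 3 4 (by omega) (by omega) (by intro i; fin_cases i <;> simp)
  let c : Block := d.seq (.move 3 0)
  have hc : ∀ n t, ∃ s, Does c (twoInputs n t) s ∧ s 0 = H n t := by
    intro n t
    have h1 := hd (twoInputs n t) (by simp [twoInputs, Function.update])
      (fun k hk => by
        have : k ≠ 1 := by omega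
        have : k ≠ 2 := by omega
        simp [twoInputs, Function.update, *])
    refine ⟨_, h1.seq (does_move (by omega) (by omega) _), ?_⟩
    simp [twoInputs, Function.update, List.Vector.ofFn]
  refine ⟨fun n => (guessMachine c n).code, computable_guessMachine c, fun n => ?_⟩
  choose fin hfin hval using hc n
  have hb : n ∈ A ↔ ∃ β, ∀ x, Reaches (guessMachine c n) x → x.cnt 0 ≤ β := by
    simp only [guessMachine_bounded hfin, hval, hHA]
    constructor
    · exact fun ⟨β, h⟩ => ⟨β, fun t => h _⟩
    · -- The machine never guesses `0`, so the value there is added to the bound.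
      rintro ⟨β, h⟩
      refine ⟨max β (H n 0), fun t => ?_⟩
      cases t with
      | zero => exact le_max_right _ _
      | succ t => exact (h t).trans (le_max_left _ _)
  rw [hb]
  constructor
  · intro h
    exact ⟨guessMachine c n, rfl, guessMachine_wellFormed c n,
      le_max_of_le_left (by omega), h⟩
  · rintro ⟨M, hM, hw, h2, h⟩
    rwa [CM.code_injective hM]

/-- **Theorem 1, second part.** The finite counter problem is Σ⁰₂-complete. -/
theorem stmt7 : Sigma02 FCset ∧ ∀ A : Set ℕ, Sigma02 A → ManyOneRed A FCset := by
  exact ⟨sigma02_FCset, fun _ hA => manyOneRed_FCset hA⟩
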